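/- For each irrational x ∈ (0,1) and each n ∈ ℕ, the continued fraction interval of depth n containing x equals the Farey interval of depth k containing x, where k = q_n + q_{n−1} − 1; that is, I_n^{𝒞ℱ}(x) = I_k^ℱ(x). Equivalently, the fractions p_n/q_n and (p_n + p_{n−1})/(q_n + q_{n−1}) are consecutive elements of the set E_k^ℱ of Farey fractions of order k+1 = q_n + q_{n−1}. -/

import Mathlib

open MeasureTheory Filter Set

noncomputable section

/-- The set `E_n^ℱ` of endpoints of the Farey partition `F_n`: rationals of `[0,1]` whose
denominator in lowest terms is at most `n+1`. -/
def fareyPts (n : ℕ) : Set ℝ :=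
  {x | ∃ p q : ℕ, q ≠ 0 ∧ q ≤ n + 1 ∧ p ≤ q ∧ Nat.gcd p q = 1 ∧ x = (p : ℝ) / q}

/-- The interval `I_n^ℱ(x)` of the Farey partition `F_n` containing `x`: the open interval
between the largest Farey point of order `n+1` below `x` and the smallest one above `x`. -/
def fareyInterval (n : ℕ) (x : ℝ) : Set ℝ :=
  Set.Ioo (sSup (fareyPts n ∩ Set.Iio x)) (sInf (fareyPts n ∩ Set.Ioi x))

/-- The partial quotient `a_{m+1}` of the continued fraction expansion of `x ∈ (0,1)`,
obtained from the Gauss map: `cfa x m = ⌊1 / T_G^m x⌋` where `T_G y = {1/y}`. -/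
def cfa (x : ℝ) (m : ℕ) : ℕ := ⌊1 / ((fun y => Int.fract (1 / y))^[m] x)⌋₊

/-- Numerators of the convergents of `x`, shifted by one: `cfp x (m+1) = p_m`, with
`p_{-1} = 1`, `p_0 = 0`, `p_{m+1} = a_{m+1} p_m + p_{m-1}`. -/
def cfp (x : ℝ) : ℕ → ℕ
  | 0 => 1
  | 1 => 0
  | m + 2 => cfa x m * cfp x (m + 1) + cfp x m

/-- Denominators of the convergents of `x`, shifted by one: `cfq x (m+1) = q_m`, with
`q_{-1} = 0`, `q_0 = 1`, `q_{m+1} = a_{m+1} q_m + q_{m-1}`. -/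
def cfq (x : ℝ) : ℕ → ℕ
  | 0 => 0
  | 1 => 1
  | m + 2 => cfa x m * cfq x (m + 1) + cfq x m

/-- The fundamental interval `I_n^{𝒞ℱ}(x)` of depth `n` of the continued fraction
expansion: the open interval with endpoints `p_n/q_n` and `(p_n+p_{n-1})/(q_n+q_{n-1})`,
the former being the left endpoint iff `n` is even. -/
def cfInterval (x : ℝ) (n : ℕ) : Set ℝ :=
  if Even n then
    Set.Ioo ((cfp x (n + 1) : ℝ) / (cfq x (n + 1) : ℝ))
      (((cfp x (n + 1) + cfp x n : ℕ) : ℝ) / ((cfq x (n + 1) + cfq x n : ℕ) : ℝ))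
  else
    Set.Ioo (((cfp x (n + 1) + cfp x n : ℕ) : ℝ) / ((cfq x (n + 1) + cfq x n : ℕ) : ℝ))
      ((cfp x (n + 1) : ℝ) / (cfq x (n + 1) : ℝ))

/-- The Lochs index `L_n(x, 𝒞ℱ, ℱ)` from the continued fraction sequence of partitions to
the Farey sequence of partitions. -/
def lochsCFtoF (x : ℝ) (n : ℕ) : ℕ :=
  sSup {ℓ : ℕ | cfInterval x n ⊆ fareyInterval ℓ x}

/-- The Lochs index `L_n(x, ℱ, 𝒞ℱ)` from the Farey sequence of partitions to the
continued fraction sequence of partitions. -/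
def lochsFtoCF (x : ℝ) (n : ℕ) : ℕ :=
  sSup {ℓ : ℕ | fareyInterval n x ⊆ cfInterval x ℓ}

/-!
The argument rests on two unimodularity facts. First, if `b * c - a * d = 1`, then every fraction
strictly between `a / b` and `c / d` has denominator at least `b + d`, because
`q = b * (c * q - p * d) + d * (p * b - a * q)` is a combination of two positive integers. Secondly,
`p_{n-1} q_n - p_n q_{n-1} = (-1)^n`, so the endpoints `p_n / q_n` and
`(p_n + p_{n-1}) / (q_n + q_{n-1})` of the continued fraction interval form such a unimodular pair,
and no Farey fraction of order `q_n + q_{n-1}` separates them. Finally `x` lies between them since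
`x = (p_n + t p_{n-1}) / (q_n + t q_{n-1})` with `t = T_G^n x ∈ (0, 1)`, and this Möbius function is
strictly monotone in `t`, taking the two endpoints as values at `t = 0` and `t = 1`.
-/

section ConsecutivePoints

variable {α : Type*} [LinearOrder α] {S : Set α} {u v x : α}

/-- `u < v` are consecutive elements of the set `S`. -/
structure AreConsecutive (S : Set α) (u v : α) : Prop where
  left_mem : u ∈ S
  right_mem : v ∈ S
  lt : u < v
  notMem_Ioo : ∀ y ∈ S, y ∉ Ioo u v

theorem AreConsecutive.isGreatest (h : AreConsecutive S u v) (hx : x ∈ Ioo u v) :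
    IsGreatest (S ∩ Iio x) u :=
  ⟨⟨h.left_mem, hx.1⟩, fun y ⟨hy, hyx⟩ ↦
    not_lt.mp fun huy ↦ h.notMem_Ioo y hy ⟨huy, hyx.trans hx.2⟩⟩

theorem AreConsecutive.isLeast (h : AreConsecutive S u v) (hx : x ∈ Ioo u v) :
    IsLeast (S ∩ Ioi x) v :=
  ⟨⟨h.right_mem, hx.2⟩, fun y ⟨hy, hxy⟩ ↦
    not_lt.mp fun hyv ↦ h.notMem_Ioo y hy ⟨hx.1.trans hxy, hyv⟩⟩

end ConsecutivePoints

theorem fareyInterval_eq_Ioo {k : ℕ} {u v x : ℝ} (h : AreConsecutive (fareyPts k) u v)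
    (hx : x ∈ Ioo u v) : fareyInterval k x = Ioo u v := by
  rw [fareyInterval, (h.isGreatest hx).csSup_eq, (h.isLeast hx).csInf_eq]

section LinearOrderedField

variable {K : Type*} [Field K] [LinearOrder K] [IsStrictOrderedRing K]

theorem add_le_of_div_mem_Ioo_of_det_eq_one {a b c d p q : ℤ} (hb : 0 < b) (hd : 0 < d)
    (hq : 0 < q) (hdet : b * c - a * d = 1) (h : (p / q : K) ∈ Ioo (a / b : K) (c / d : K)) :
    b + d ≤ q := by
  have hb' : (0 : K) < b := mod_cast hb
  have hd' : (0 : K) < d := mod_cast hd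
  have hq' : (0 : K) < q := mod_cast hq
  have hleft : a * q + 1 ≤ p * b := mod_cast (div_lt_div_iff₀ hb' hq').mp h.1
  have hright : p * d + 1 ≤ c * q := mod_cast (div_lt_div_iff₀ hq' hd').mp h.2
  calc b + d = b * 1 + d * 1 := by ring
    _ ≤ b * (c * q - p * d) + d * (p * b - a * q) := by gcongr <;> linarith
    _ = q := by linear_combination q * hdet

theorem strictMonoOn_add_mul_div_add_mul {p q p' q' : K} (hq : 0 < q) (hq' : 0 ≤ q')
    (hdet : 0 < p' * q - p * q') :
    StrictMonoOn (fun t ↦ (p + t * p') / (q + t * q')) (Ici 0) := by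
  intro s (hs : 0 ≤ s) t (ht : 0 ≤ t) hst
  have hsub : 0 < (t - s) * (p' * q - p * q') := mul_pos (sub_pos.mpr hst) hdet
  refine (div_lt_div_iff₀ (by positivity) (by positivity)).mpr ?_
  linarith

theorem strictAntiOn_add_mul_div_add_mul {p q p' q' : K} (hq : 0 < q) (hq' : 0 ≤ q')
    (hdet : p' * q - p * q' < 0) :
    StrictAntiOn (fun t ↦ (p + t * p') / (q + t * q')) (Ici 0) := by
  have hneg := strictMonoOn_add_mul_div_add_mul (p := -p) (p' := -p') hq hq' (by linarith)
  refine hneg.neg.congr fun t _ ↦ ?_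
  ring

end LinearOrderedField

theorem div_mem_fareyPts {k p q : ℕ} (hq : 0 < q) (hqk : q ≤ k + 1) (hpq : p ≤ q)
    (hcop : p.Coprime q) : (p / q : ℝ) ∈ fareyPts k :=
  ⟨p, q, hq.ne', hqk, hpq, hcop, rfl⟩

theorem areConsecutive_fareyPts_of_det_eq_one {a b c d k : ℕ} (hb : 0 < b) (hd : 0 < d)
    (hcd : c ≤ d) (hdet : (b * c - a * d : ℤ) = 1) (hbk : b ≤ k + 1) (hdk : d ≤ k + 1)
    (hk : k + 1 < b + d) : AreConsecutive (fareyPts k) (a / b : ℝ) (c / d : ℝ) := by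
  have hlt : a * d < c * b := by zify; linarith
  have hab : a ≤ b := by nlinarith
  have hcop_ab : a.Coprime b :=
    Nat.isCoprime_iff_coprime.mp ⟨-d, c, by linear_combination hdet⟩
  have hcop_cd : c.Coprime d :=
    Nat.isCoprime_iff_coprime.mp ⟨b, -a, by linear_combination hdet⟩
  refine ⟨div_mem_fareyPts hb hbk hab hcop_ab, div_mem_fareyPts hd hdk hcd hcop_cd,
    (div_lt_div_iff₀ (mod_cast hb) (mod_cast hd)).mpr (mod_cast hlt), ?_⟩
  rintro _ ⟨p, q, hq, hqk, -, -, rfl⟩ hmem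
  have hle : (b + d : ℤ) ≤ q :=
    add_le_of_div_mem_Ioo_of_det_eq_one (K := ℝ) (p := p) (mod_cast hb) (mod_cast hd)
      (mod_cast Nat.pos_of_ne_zero hq) hdet (by simpa only [Int.cast_natCast] using hmem)
  omega

section GaussMap

variable {x : ℝ} {n : ℕ}

/-- The Gauss map `T_G y = {1 / y}`. Since `1 / 0 = 0` in Lean, it fixes `0`, so
`T_G^n x ≠ 0` says that the continued fraction expansion of `x` has a partial quotient `a_{n+1}`. -/
def gaussMap (y : ℝ) : ℝ := Int.fract (1 / y)

theorem gaussMap_zero : gaussMap 0 = 0 := by simp [gaussMap]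

theorem gaussMap_nonneg (y : ℝ) : 0 ≤ gaussMap y := Int.fract_nonneg _

theorem gaussMap_lt_one (y : ℝ) : gaussMap y < 1 := Int.fract_lt_one _

theorem irrational_gaussMap (hx : Irrational x) : Irrational (gaussMap x) := by
  rw [gaussMap, one_div]
  exact hx.inv.sub_intCast _

theorem irrational_iterate_gaussMap (hx : Irrational x) (n : ℕ) : Irrational (gaussMap^[n] x) := by
  have hmaps : MapsTo gaussMap {y | Irrational y} {y | Irrational y} := fun _ ↦ irrational_gaussMap
  exact hmaps.iterate n hx

theorem iterate_gaussMap_ne_zero_of_succ (h : gaussMap^[n + 1] x ≠ 0) : gaussMap^[n] x ≠ 0 := by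
  rw [Function.iterate_succ_apply'] at h
  exact fun h0 ↦ h (by rw [h0, gaussMap_zero])

theorem iterate_gaussMap_nonneg (hx : 0 ≤ x) (n : ℕ) : 0 ≤ gaussMap^[n] x := by
  have hmaps : MapsTo gaussMap (Ici 0) (Ici 0) := fun y _ ↦ gaussMap_nonneg y
  exact hmaps.iterate n hx

theorem iterate_gaussMap_lt_one (hx : x < 1) (n : ℕ) : gaussMap^[n] x < 1 := by
  have hmaps : MapsTo gaussMap (Iio 1) (Iio 1) := fun y _ ↦ gaussMap_lt_one y
  exact hmaps.iterate n hx

theorem one_div_iterate_gaussMap (hx : 0 ≤ x) (n : ℕ) :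
    1 / gaussMap^[n] x = cfa x n + gaussMap^[n + 1] x := by
  have hfloor : (cfa x n : ℝ) = ⌊1 / gaussMap^[n] x⌋ :=
    natCast_floor_eq_intCast_floor (one_div_nonneg.mpr (iterate_gaussMap_nonneg hx n))
  rw [Function.iterate_succ_apply', hfloor, gaussMap, Int.floor_add_fract]

end GaussMap

section Convergents

variable {x : ℝ} {n : ℕ}

theorem cfa_zero_pos (hx : x ∈ Ioc 0 1) : 0 < cfa x 0 :=
  Nat.floor_pos.mpr ((one_le_div hx.1).mpr hx.2)

theorem cfq_succ_pos (hx : x ∈ Ioc 0 1) : ∀ n, 0 < cfq x (n + 1)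
  | 0 => one_pos
  | 1 => by simpa [cfq] using cfa_zero_pos hx
  | n + 2 => Nat.add_pos_right _ (cfq_succ_pos hx n)

theorem cfp_succ_le_cfq_succ (hx : x ∈ Ioc 0 1) : ∀ n, cfp x (n + 1) ≤ cfq x (n + 1)
  | 0 => zero_le_one
  | 1 => by simpa [cfp, cfq] using Nat.succ_le_of_lt (cfa_zero_pos hx)
  | n + 2 => Nat.add_le_add (Nat.mul_le_mul_left _ (cfp_succ_le_cfq_succ hx (n + 1)))
      (cfp_succ_le_cfq_succ hx n)

theorem cfp_succ_add_cfp_le (hx : x ∈ Ioc 0 1) :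
    ∀ n, cfp x (n + 1) + cfp x n ≤ cfq x (n + 1) + cfq x n
  | 0 => le_rfl
  | n + 1 => Nat.add_le_add (cfp_succ_le_cfq_succ hx (n + 1)) (cfp_succ_le_cfq_succ hx n)

theorem cfp_mul_cfq_succ_sub (x : ℝ) (n : ℕ) :
    (cfp x n * cfq x (n + 1) - cfp x (n + 1) * cfq x n : ℤ) = (-1) ^ n := by
  induction n with
  | zero => simp [cfp, cfq]
  | succ n ih =>
    rw [cfp, cfq, pow_succ, ← ih]
    push_cast
    ring

theorem mul_cfq_add_iterate_gaussMap (hx : 0 ≤ x) (hn : gaussMap^[n] x ≠ 0) :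
    x * (cfq x (n + 1) + gaussMap^[n] x * cfq x n) =
      cfp x (n + 1) + gaussMap^[n] x * cfp x n := by
  induction n with
  | zero => simp [cfp, cfq]
  | succ n ih =>
    have hn' := iterate_gaussMap_ne_zero_of_succ hn
    have hone : gaussMap^[n] x * (cfa x n + gaussMap^[n + 1] x) = 1 := by
      rw [← one_div_iterate_gaussMap hx, mul_one_div_cancel hn']
    rw [cfp, cfq]
    push_cast
    linear_combination (cfa x n + gaussMap^[n + 1] x) * ih hn' +
      (cfp x n - x * cfq x n) * hone

theorem cfInterval_of_even (hn : Even n) :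
    cfInterval x n = Ioo ((cfp x (n + 1) : ℝ) / (cfq x (n + 1) : ℝ))
      (((cfp x (n + 1) + cfp x n : ℕ) : ℝ) / ((cfq x (n + 1) + cfq x n : ℕ) : ℝ)) :=
  if_pos hn

theorem cfInterval_of_odd (hn : Odd n) :
    cfInterval x n = Ioo (((cfp x (n + 1) + cfp x n : ℕ) : ℝ) / ((cfq x (n + 1) + cfq x n : ℕ) : ℝ))
      ((cfp x (n + 1) : ℝ) / (cfq x (n + 1) : ℝ)) :=
  if_neg (Nat.not_even_iff_odd.mpr hn)

theorem mem_cfInterval (hx : x ∈ Ioo 0 1) (hn : gaussMap^[n] x ≠ 0) : x ∈ cfInterval x n := by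
  set t := gaussMap^[n] x
  have ht₀ : 0 < t := (iterate_gaussMap_nonneg hx.1.le n).lt_of_ne' hn
  have ht₁ : t < 1 := iterate_gaussMap_lt_one hx.2 n
  have hq : (0 : ℝ) < cfq x (n + 1) := mod_cast cfq_succ_pos (Ioo_subset_Ioc_self hx) n
  have hq' : (0 : ℝ) ≤ cfq x n := Nat.cast_nonneg _
  have hdet : (cfp x n * cfq x (n + 1) - cfp x (n + 1) * cfq x n : ℝ) = (-1) ^ n :=
    mod_cast cfp_mul_cfq_succ_sub x n
  have hxt : (cfp x (n + 1) + t * cfp x n) / (cfq x (n + 1) + t * cfq x n) = x := by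
    rw [div_eq_iff (by positivity), mul_cfq_add_iterate_gaussMap hx.1.le hn]
  rcases n.even_or_odd with heven | hodd
  · rw [heven.neg_one_pow] at hdet
    have hmono := strictMonoOn_add_mul_div_add_mul hq hq' (hdet ▸ one_pos)
    have hleft := hmono self_mem_Ici ht₀.le ht₀
    have hright := hmono ht₀.le (zero_le_one' ℝ) ht₁
    simpa [cfInterval_of_even heven, hxt] using And.intro hleft hright
  · rw [hodd.neg_one_pow] at hdet
    have hanti := strictAntiOn_add_mul_div_add_mul hq hq' (hdet ▸ neg_one_lt_zero)
    have hleft := hanti ht₀.le (zero_le_one' ℝ) ht₁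
    have hright := hanti self_mem_Ici ht₀.le ht₀
    simpa [cfInterval_of_odd hodd, hxt] using And.intro hleft hright

theorem areConsecutive_endpoints_of_even (hx : x ∈ Ioc 0 1) (hn : Even n) :
    AreConsecutive (fareyPts (cfq x (n + 1) + cfq x n - 1))
      ((cfp x (n + 1) : ℝ) / (cfq x (n + 1) : ℝ))
      (((cfp x (n + 1) + cfp x n : ℕ) : ℝ) / ((cfq x (n + 1) + cfq x n : ℕ) : ℝ)) := by
  have hq := cfq_succ_pos hx n
  have hdet := cfp_mul_cfq_succ_sub x n
  rw [hn.neg_one_pow] at hdet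
  exact areConsecutive_fareyPts_of_det_eq_one hq (by omega) (cfp_succ_add_cfp_le hx n)
    (by push_cast; linear_combination hdet) (by omega) (by omega) (by omega)

theorem areConsecutive_endpoints_of_odd (hx : x ∈ Ioc 0 1) (hn : Odd n) :
    AreConsecutive (fareyPts (cfq x (n + 1) + cfq x n - 1))
      (((cfp x (n + 1) + cfp x n : ℕ) : ℝ) / ((cfq x (n + 1) + cfq x n : ℕ) : ℝ))
      ((cfp x (n + 1) : ℝ) / (cfq x (n + 1) : ℝ)) := by
  have hq := cfq_succ_pos hx n
  have hdet := cfp_mul_cfq_succ_sub x n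
  rw [hn.neg_one_pow] at hdet
  exact areConsecutive_fareyPts_of_det_eq_one (by omega) hq (cfp_succ_le_cfq_succ hx n)
    (by push_cast; linear_combination -hdet) (by omega) (by omega) (by omega)

end Convergents

theorem cfInterval_eq_fareyInterval_general (x : ℝ) (hx : x ∈ Set.Ioo (0 : ℝ) 1) (n : ℕ)
    (hn : gaussMap^[n] x ≠ 0) :
    cfInterval x n = fareyInterval (cfq x (n + 1) + cfq x n - 1) x ∧
    (cfp x (n + 1) : ℝ) / (cfq x (n + 1) : ℝ) ∈ fareyPts (cfq x (n + 1) + cfq x n - 1) ∧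
    ((cfp x (n + 1) + cfp x n : ℕ) : ℝ) / ((cfq x (n + 1) + cfq x n : ℕ) : ℝ) ∈
      fareyPts (cfq x (n + 1) + cfq x n - 1) ∧
    ∀ y ∈ fareyPts (cfq x (n + 1) + cfq x n - 1),
      y ∉ Set.Ioo
        (min ((cfp x (n + 1) : ℝ) / (cfq x (n + 1) : ℝ))
          (((cfp x (n + 1) + cfp x n : ℕ) : ℝ) / ((cfq x (n + 1) + cfq x n : ℕ) : ℝ)))
        (max ((cfp x (n + 1) : ℝ) / (cfq x (n + 1) : ℝ))
          (((cfp x (n + 1) + cfp x n : ℕ) : ℝ) / ((cfq x (n + 1) + cfq x n : ℕ) : ℝ))) := by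
  have hmem := mem_cfInterval hx hn
  have hx' := Ioo_subset_Ioc_self hx
  rcases n.even_or_odd with heven | hodd
  · have hcons := areConsecutive_endpoints_of_even hx' heven
    rw [cfInterval_of_even heven] at hmem ⊢
    rw [fareyInterval_eq_Ioo hcons hmem, min_eq_left hcons.lt.le, max_eq_right hcons.lt.le]
    exact ⟨rfl, hcons.left_mem, hcons.right_mem, hcons.notMem_Ioo⟩
  · have hcons := areConsecutive_endpoints_of_odd hx' hodd
    rw [cfInterval_of_odd hodd] at hmem ⊢
    rw [fareyInterval_eq_Ioo hcons hmem, min_eq_right hcons.lt.le, max_eq_left hcons.lt.le]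
    exact ⟨rfl, hcons.right_mem, hcons.left_mem, hcons.notMem_Ioo⟩

/-- The continued fraction interval of depth `n` containing an irrational `x ∈ (0,1)` is
the Farey interval of depth `k = q_n + q_{n-1} − 1` containing `x`; equivalently,
`p_n/q_n` and `(p_n+p_{n-1})/(q_n+q_{n-1})` are consecutive Farey fractions of order
`k + 1 = q_n + q_{n-1}`. Here `q_n = cfq x (n+1)`, `q_{n-1} = cfq x n`, etc. -/
theorem cfInterval_eq_fareyInterval (x : ℝ) (hx : x ∈ Set.Ioo (0 : ℝ) 1)
    (hirr : Irrational x) (n : ℕ) :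
    cfInterval x n = fareyInterval (cfq x (n + 1) + cfq x n - 1) x ∧
    (cfp x (n + 1) : ℝ) / (cfq x (n + 1) : ℝ) ∈ fareyPts (cfq x (n + 1) + cfq x n - 1) ∧
    ((cfp x (n + 1) + cfp x n : ℕ) : ℝ) / ((cfq x (n + 1) + cfq x n : ℕ) : ℝ) ∈
      fareyPts (cfq x (n + 1) + cfq x n - 1) ∧
    ∀ y ∈ fareyPts (cfq x (n + 1) + cfq x n - 1),
      y ∉ Set.Ioo
        (min ((cfp x (n + 1) : ℝ) / (cfq x (n + 1) : ℝ))
          (((cfp x (n + 1) + cfp x n : ℕ) : ℝ) / ((cfq x (n + 1) + cfq x n : ℕ) : ℝ)))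
        (max ((cfp x (n + 1) : ℝ) / (cfq x (n + 1) : ℝ))
          (((cfp x (n + 1) + cfp x n : ℕ) : ℝ) / ((cfq x (n + 1) + cfq x n : ℕ) : ℝ))) :=
  cfInterval_eq_fareyInterval_general x hx n (irrational_iterate_gaussMap hirr n).ne_zero
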